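/- There exists an absolute constant c > 0 such that for every positive integer n and every convex polytope P ⊂ ℝⁿ satisfying B_n ⊆ P ⊆ √n·B_n (where B_n is the Euclidean unit ball in ℝⁿ), one has log|V| · log|𝓕| ≥ c·n, where V is the set of vertices of P and 𝓕 is the set of facets of P. -/

import Mathlib

open Set Metric

/-- `F` is a `k`-dimensional face of the convex set `P`: a nonempty convex
extreme subset of `P` whose affine hull has dimension `k`. -/
def IsFaceOfDim {n : ℕ} (P F : Set (EuclideanSpace ℝ (Fin n))) (k : ℕ) : Prop :=
  F.Nonempty ∧ Convex ℝ F ∧ IsExtreme ℝ P F ∧ Module.finrank ℝ (vectorSpan ℝ F) = k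

/-- The one-sided polar body of `P` with respect to the inner product. -/
def innerPolar {E : Type*} [NormedAddCommGroup E] [InnerProductSpace ℝ E] (P : Set E) : Set E :=
  {y | ∀ p ∈ P, inner ℝ y p ≤ 1}

section Polar

variable {E : Type*} [NormedAddCommGroup E] [InnerProductSpace ℝ E]

theorem convex_innerPolar (P : Set E) : Convex ℝ (innerPolar P) := by
  intro x hx y hy a b ha hb hab p hp
  rw [inner_add_left, real_inner_smul_left, real_inner_smul_left]
  nlinarith [hx p hp, hy p hp, mul_le_mul_of_nonneg_left (hx p hp) ha,
    mul_le_mul_of_nonneg_left (hy p hp) hb]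

theorem isClosed_innerPolar (P : Set E) : IsClosed (innerPolar P) := by
  have : innerPolar P = ⋂ p ∈ P, {y | inner ℝ y p ≤ 1} := by
    ext y
    simp [innerPolar]
  rw [this]
  exact isClosed_biInter fun p _ => isClosed_le (by fun_prop) continuous_const

theorem norm_le_one_of_mem_innerPolar {P : Set E} (hP : closedBall 0 1 ⊆ P) {y : E}
    (hy : y ∈ innerPolar P) : ‖y‖ ≤ 1 := by
  rcases eq_or_ne y 0 with rfl | h
  · simp
  have h' : ‖y‖ ≠ 0 := by simpa using h
  have := hy (‖y‖⁻¹ • y) (hP (by simp [norm_smul, h']))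
  rw [real_inner_smul_right, real_inner_self_eq_norm_sq] at this
  field_simp at this
  exact this

theorem closedBall_inv_subset_innerPolar {P : Set E} {R : ℝ} (hR : 0 < R)
    (hP : P ⊆ closedBall 0 R) : closedBall 0 R⁻¹ ⊆ innerPolar P := by
  intro y hy p hp
  have hp' := hP hp
  rw [mem_closedBall_zero_iff] at hy hp'
  calc inner ℝ y p ≤ ‖y‖ * ‖p‖ := real_inner_le_norm y p
    _ ≤ R⁻¹ * R := by gcongr
    _ = 1 := inv_mul_cancel₀ hR.ne'

theorem mem_of_forall_innerPolar [CompleteSpace E] {P : Set E} (hc : Convex ℝ P)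
    (hcl : IsClosed P) (h0 : 0 ∈ P) {x : E} (hx : ∀ y ∈ innerPolar P, inner ℝ y x ≤ 1) :
    x ∈ P := by
  by_contra hxP
  obtain ⟨f, u, hf, hu⟩ := geometric_hahn_banach_closed_point hc hcl hxP
  have hu0 : 0 < u := by simpa using hf 0 h0
  obtain ⟨w, rfl⟩ := (InnerProductSpace.toDual ℝ E).surjective f
  simp only [InnerProductSpace.toDual_apply_apply] at hf hu
  have h := hx (u⁻¹ • w) fun p hp => by
    rw [real_inner_smul_left, inv_mul_le_iff₀ hu0]
    linarith [hf p hp]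
  rw [real_inner_smul_left, inv_mul_le_iff₀ hu0] at h
  linarith

/-- A closed half-space containing the extreme points of a compact convex set contains the set. -/
theorem inner_le_of_forall_extremePoints {K : Set E} (hK : IsCompact K) (hc : Convex ℝ K) {x : E}
    {t : ℝ} (h : ∀ v ∈ K.extremePoints ℝ, inner ℝ v x ≤ t) : ∀ v ∈ K, inner ℝ v x ≤ t := by
  have hcl : IsClosed {v : E | inner ℝ v x ≤ t} := isClosed_le (by fun_prop) continuous_const
  have hcv : Convex ℝ {v : E | inner ℝ v x ≤ t} := by
    intro a ha b hb r s hr hs hrs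
    simp only [mem_ofPred_eq] at *
    rw [inner_add_left, real_inner_smul_left, real_inner_smul_left]
    calc r * inner ℝ a x + s * inner ℝ b x ≤ r * t + s * t := by gcongr
      _ = t := by rw [← add_mul, hrs, one_mul]
  have := closure_minimal (convexHull_min h hcv) hcl
  rwa [closure_convexHull_extremePoints hK hc] at this

theorem two_le_ncard_extremePoints [Nontrivial E] {K : Set E} (hK : IsCompact K)
    (hc : Convex ℝ K) {r : ℝ} (hr : 0 < r) (hb : closedBall 0 r ⊆ K)
    (hfin : (K.extremePoints ℝ).Finite) : 2 ≤ (K.extremePoints ℝ).ncard := by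
  by_contra! hlt
  have hs : (K.extremePoints ℝ).Subsingleton := by
    intro a ha b hb
    exact (Set.ncard_le_one hfin).1 (by omega) a ha b hb
  have hKs : K.Subsingleton := by
    rw [← closure_convexHull_extremePoints hK hc]
    refine Set.Subsingleton.closure ?_
    rcases hs.eq_empty_or_singleton with h | ⟨a, h⟩ <;> rw [h] <;> simp
  obtain ⟨x, hx⟩ := exists_norm_eq E hr.le
  have := hKs (hb (by simp [hx] : x ∈ closedBall 0 r)) (hb (by simp [hr.le] : (0 : E) ∈ _))
  simp [this] at hx
  exact hr.ne hx

theorem mem_innerPolar_convexHull {S : Set E} {y : E} (h : ∀ s ∈ S, inner ℝ y s ≤ 1) :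
    y ∈ innerPolar (convexHull ℝ S) := by
  have hcv : Convex ℝ {v : E | inner ℝ y v ≤ 1} := by
    intro a ha b hb r s hr hs hrs
    simp only [mem_ofPred_eq] at *
    rw [inner_add_right, real_inner_smul_right, real_inner_smul_right]
    nlinarith [mul_le_mul_of_nonneg_left ha hr, mul_le_mul_of_nonneg_left hb hs]
  exact convexHull_min h hcv

/-- The constraints that are tight at a vertex of the polar of a polytope span the space. -/
theorem span_tight_eq_top [FiniteDimensional ℝ E] (S : Finset E) {y : E}
    (hy : y ∈ (innerPolar (convexHull ℝ (S : Set E))).extremePoints ℝ) :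
    Submodule.span ℝ {s : E | s ∈ S ∧ inner ℝ y s = 1} = ⊤ := by
  rw [← Submodule.orthogonal_eq_bot_iff, Submodule.eq_bot_iff]
  intro z hz
  have hz' : ∀ s ∈ S, inner ℝ y s = 1 → inner ℝ z s = 0 := fun s hs h => by
    rw [real_inner_comm]
    exact (Submodule.mem_orthogonal _ _).1 hz s (Submodule.subset_span ⟨hs, h⟩)
  have key : ∀ w : E, (∀ s ∈ S, inner ℝ y s = 1 → inner ℝ w s = 0) →
      ∀ᶠ δ : ℝ in nhdsWithin 0 (Ioi 0),
        y + δ • w ∈ innerPolar (convexHull ℝ (S : Set E)) := by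
    intro w hw
    have : ∀ᶠ δ : ℝ in nhds 0, ∀ s ∈ S, inner ℝ (y + δ • w) s ≤ 1 := by
      rw [Filter.eventually_all_finset]
      intro s hs
      rcases (hy.1 s (subset_convexHull ℝ _ hs)).lt_or_eq with h | h
      · have hcont : Filter.Tendsto (fun δ : ℝ => inner ℝ (y + δ • w) s) (nhds 0)
            (nhds (inner ℝ (y + (0 : ℝ) • w) s)) :=
          Continuous.tendsto (by fun_prop) 0
        rw [zero_smul, add_zero] at hcont
        exact (hcont.eventually_lt_const h).mono fun _ h => h.le
      · refine Filter.Eventually.of_forall fun δ => ?_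
        rw [inner_add_left, real_inner_smul_left, hw s hs h, h]
        simp
    exact (this.filter_mono nhdsWithin_le_nhds).mono fun δ h => mem_innerPolar_convexHull h
  obtain ⟨δ, ⟨h1, h2⟩, hδ⟩ := (((key z hz').and (key (-z) fun s hs h => by
    rw [inner_neg_left, hz' s hs h, neg_zero])).and self_mem_nhdsWithin).exists
  have := hy.2 h1 h2 ⟨1 / 2, 1 / 2, by norm_num, by norm_num, by norm_num, by module⟩
  have hδ0 : δ ≠ 0 := ne_of_gt hδ
  simpa [hδ0] using this

/-- A convex extreme subset of a polytope is the convex hull of the generators it contains. -/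
theorem IsExtreme.eq_convexHull_inter {S : Finset E} {F : Set E}
    (hF : IsExtreme ℝ (convexHull ℝ (S : Set E)) F) (hc : Convex ℝ F) :
    F = convexHull ℝ ((S : Set E) ∩ F) := by
  refine Subset.antisymm (fun x hx => ?_) (convexHull_min inter_subset_right hc)
  obtain ⟨w, hw0, hw1, hwx⟩ := Finset.mem_convexHull'.1 (hF.subset hx)
  have hmem : ∀ s ∈ S, w s ≠ 0 → s ∈ F := by
    intro s hs hws
    have hSP := subset_convexHull ℝ (S : Set E)
    have hpos : 0 < w s := (hw0 s hs).lt_of_ne' hws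
    classical
    have hsum : w s + ∑ i ∈ S.erase s, w i = 1 := by rw [Finset.add_sum_erase _ _ hs, hw1]
    have hxs : w s • s + ∑ i ∈ S.erase s, w i • i = x := by
      rw [Finset.add_sum_erase _ (fun i => w i • i) hs, hwx]
    have hnn : ∀ i ∈ S.erase s, 0 ≤ w i := fun i hi => hw0 i (Finset.mem_of_mem_erase hi)
    rcases (Finset.sum_nonneg hnn).eq_or_lt with h | h
    · have h0 := (Finset.sum_eq_zero_iff_of_nonneg hnn).1 h.symm
      rw [Finset.sum_eq_zero fun i hi => by rw [h0 i hi, zero_smul]] at hxs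
      rw [← h, add_zero] at hsum
      rw [hsum, one_smul, add_zero] at hxs
      rwa [hxs]
    · refine hF.left_mem_of_mem_openSegment (hSP hs)
        ((convex_convexHull ℝ _).centerMass_mem hnn h
          fun i hi => hSP (Finset.mem_of_mem_erase hi)) hx
        ⟨w s, _, hpos, h, hsum, ?_⟩
      rw [Finset.centerMass, smul_inv_smul₀ h.ne']
      exact hxs
  rw [← hwx, ← Finset.sum_filter_of_ne (p := fun s => w s ≠ 0)
    fun s _ h h' => h (by rw [h', zero_smul])]
  refine (convex_convexHull ℝ _).sum_mem (fun s hs => hw0 s (Finset.mem_filter.1 hs).1) ?_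
    fun s hs => subset_convexHull ℝ _ ?_
  · rw [Finset.sum_filter_ne_zero, hw1]
  · rw [Finset.mem_filter] at hs
    exact ⟨hs.1, hmem s hs.1 hs.2⟩

theorem finite_setOf_convex_isExtreme (S : Finset E) :
    {F : Set E | Convex ℝ F ∧ IsExtreme ℝ (convexHull ℝ (S : Set E)) F}.Finite := by
  refine (S.finite_toSet.finite_subsets.image (convexHull ℝ)).subset ?_
  rintro F ⟨hc, hF⟩
  exact ⟨_, inter_subset_left, (hF.eq_convexHull_inter hc).symm⟩

end Polar

section Facets

variable {n : ℕ}

local notation "𝔼" => EuclideanSpace ℝ (Fin n)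

theorem isFaceOfDim_of_mem_extremePoints_innerPolar (hn : 0 < n) (S : Finset 𝔼) {y : 𝔼}
    (hy : y ∈ (innerPolar (convexHull ℝ (S : Set 𝔼))).extremePoints ℝ) :
    IsFaceOfDim (convexHull ℝ (S : Set 𝔼))
      {p ∈ convexHull ℝ (S : Set 𝔼) | inner ℝ y p = 1} (n - 1) := by
  set P := convexHull ℝ (S : Set 𝔼)
  have htop := span_tight_eq_top S hy
  have hsub : {s : 𝔼 | s ∈ S ∧ inner ℝ y s = 1} ⊆ {p ∈ P | inner ℝ y p = 1} :=
    fun s hs => ⟨subset_convexHull ℝ _ hs.1, hs.2⟩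
  have : Nontrivial 𝔼 := Module.nontrivial_of_finrank_pos (R := ℝ) (by simpa using hn)
  have hne : {s : 𝔼 | s ∈ S ∧ inner ℝ y s = 1}.Nonempty := by
    by_contra h
    rw [Set.not_nonempty_iff_eq_empty] at h
    rw [h, Submodule.span_empty] at htop
    exact bot_ne_top htop
  have hcv : Convex ℝ P := convex_convexHull ℝ _
  obtain ⟨p₀, hp₀⟩ := hne.mono hsub
  have hexp : IsExposed ℝ P {p ∈ P | inner ℝ y p = 1} := fun _ => by
    refine ⟨InnerProductSpace.toDual ℝ 𝔼 y, ?_⟩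
    ext p
    simp only [mem_ofPred_eq, InnerProductSpace.toDual_apply_apply]
    refine and_congr_right fun hp => ⟨fun h q hq => h ▸ hy.1 q hq, fun h => ?_⟩
    exact (hy.1 p hp).antisymm (hp₀.2 ▸ h p₀ hp₀.1)
  refine ⟨⟨p₀, hp₀⟩, hexp.convex hcv, hexp.isExtreme, ?_⟩
  have hy0 : y ≠ 0 := by
    rintro rfl
    simpa using hp₀.2
  set V := vectorSpan ℝ {p ∈ P | inner ℝ y p = 1}
  have hle : V ≤ (Submodule.span ℝ {y})ᗮ := by
    refine Submodule.span_le.2 ?_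
    rintro _ ⟨a, ha, b, hb, rfl⟩
    rw [SetLike.mem_coe, Submodule.mem_orthogonal_singleton_iff_inner_right]
    simp only [vsub_eq_sub, inner_sub_right, ha.2, hb.2, sub_self]
  have h1 := Submodule.finrank_mono hle
  have h2 := Submodule.finrank_add_finrank_orthogonal (Submodule.span ℝ {y})
  rw [finrank_span_singleton hy0, finrank_euclideanSpace_fin] at h2
  have h3 : V ⊔ Submodule.span ℝ {p₀} = ⊤ := by
    rw [eq_top_iff, ← htop]
    refine Submodule.span_le.2 fun s hs => ?_
    have : s = (s - p₀) + p₀ := by abel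
    rw [this]
    exact Submodule.add_mem_sup (vsub_mem_vectorSpan ℝ (hsub hs) hp₀)
      (Submodule.mem_span_singleton_self p₀)
  have h4 := Submodule.finrank_add_le_finrank_add_finrank V (Submodule.span ℝ {p₀})
  have h5 := finrank_span_le_card (R := ℝ) ({p₀} : Set 𝔼)
  rw [h3, finrank_top, finrank_euclideanSpace_fin] at h4
  simp only [Set.toFinset_singleton, Finset.card_singleton] at h5
  omega

theorem finite_setOf_isFaceOfDim (S : Finset 𝔼) (k : ℕ) :
    {F : Set 𝔼 | IsFaceOfDim (convexHull ℝ (S : Set 𝔼)) F k}.Finite :=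
  (finite_setOf_convex_isExtreme S).subset fun _ hF => ⟨hF.2.1, hF.2.2.1⟩

theorem injOn_facet_extremePoints_innerPolar (S : Finset 𝔼) :
    InjOn (fun y : 𝔼 => {p ∈ convexHull ℝ (S : Set 𝔼) | inner ℝ y p = 1})
      ((innerPolar (convexHull ℝ (S : Set 𝔼))).extremePoints ℝ) := by
  intro y hy z _ hyz
  have htop := span_tight_eq_top S hy
  refine ext_inner_right ℝ fun v => ?_
  have hv : v ∈ Submodule.span ℝ {s : 𝔼 | s ∈ S ∧ inner ℝ y s = 1} := htop ▸ Submodule.mem_top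
  induction hv using Submodule.span_induction with
  | mem s hs =>
    have : s ∈ {p ∈ convexHull ℝ (S : Set 𝔼) | inner ℝ y p = 1} :=
      ⟨subset_convexHull ℝ _ hs.1, hs.2⟩
    simp only at hyz
    rw [hyz] at this
    rw [hs.2, this.2]
  | zero => simp
  | add a b _ _ ha hb => rw [inner_add_right, inner_add_right, ha, hb]
  | smul r a _ ha => rw [real_inner_smul_right, real_inner_smul_right, ha]

theorem finite_extremePoints_innerPolar (hn : 0 < n) (S : Finset 𝔼) :
    ((innerPolar (convexHull ℝ (S : Set 𝔼))).extremePoints ℝ).Finite :=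
  Set.Finite.of_injOn (t := {F : Set 𝔼 | IsFaceOfDim (convexHull ℝ (S : Set 𝔼)) F (n - 1)})
    (fun _ hy => isFaceOfDim_of_mem_extremePoints_innerPolar hn S hy)
    (injOn_facet_extremePoints_innerPolar S) (finite_setOf_isFaceOfDim S _)

theorem ncard_extremePoints_innerPolar_le (hn : 0 < n) (S : Finset 𝔼) :
    ((innerPolar (convexHull ℝ (S : Set 𝔼))).extremePoints ℝ).ncard ≤
      {F : Set 𝔼 | IsFaceOfDim (convexHull ℝ (S : Set 𝔼)) F (n - 1)}.ncard :=
  Set.ncard_le_ncard_of_injOn _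
    (fun _ hy => isFaceOfDim_of_mem_extremePoints_innerPolar hn S hy)
    (injOn_facet_extremePoints_innerPolar S) (finite_setOf_isFaceOfDim S _)

end Facets

section Signs

variable {n : ℕ}

/-- The vector of signs `±1` encoded by a Boolean function. -/
noncomputable def signVector (ε : Fin n → Bool) : EuclideanSpace ℝ (Fin n) :=
  WithLp.toLp 2 fun i => if ε i then 1 else -1

theorem inner_signVector_self (ε : Fin n → Bool) :
    inner ℝ (signVector ε) (signVector ε) = (n : ℝ) := by
  rw [PiLp.inner_apply]
  have h : ∀ i, inner ℝ (signVector ε i) (signVector ε i) = (1 : ℝ) := fun i => by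
    simp only [signVector]
    split_ifs <;> simp
  simp_rw [h]
  simp

theorem sum_exp_inner_signVector_le (x : EuclideanSpace ℝ (Fin n)) :
    ∑ ε : Fin n → Bool, Real.exp (inner ℝ x (signVector ε)) ≤
      2 ^ n * Real.exp (‖x‖ ^ 2 / 2) := by
  have h1 : ∀ ε : Fin n → Bool, Real.exp (inner ℝ x (signVector ε)) =
      ∏ i, Real.exp (if ε i then x i else -x i) := by
    intro ε
    rw [← Real.exp_sum, PiLp.inner_apply]
    congr 1
    refine Finset.sum_congr rfl fun i _ => ?_
    simp only [signVector]
    split_ifs <;> simp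
  simp_rw [h1]
  have h2 := Finset.prod_univ_sum (fun _ : Fin n => (Finset.univ : Finset Bool))
    (fun i b => Real.exp (if b then x i else -x i))
  rw [Fintype.piFinset_univ] at h2
  rw [← h2, EuclideanSpace.real_norm_sq_eq, Finset.sum_div, Real.exp_sum]
  calc ∏ i, ∑ b : Bool, Real.exp (if b then x i else -x i)
      = ∏ i, 2 * Real.cosh (x i) := by
        refine Finset.prod_congr rfl fun i _ => ?_
        rw [Real.cosh_eq]
        simp
        ring
    _ ≤ ∏ i, 2 * Real.exp (x i ^ 2 / 2) :=
        Finset.prod_le_prod (fun i _ => by positivity)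
          fun i _ => by gcongr; exact Real.cosh_le_exp_half_sq _
    _ = 2 ^ n * ∏ i, Real.exp (x i ^ 2 / 2) := by simp [Finset.prod_mul_distrib]

/-- By the union bound, some sign vector is below all the prescribed levels in all the prescribed
directions. -/
theorem exists_signVector_inner_lt {ι : Type*} [Fintype ι] (x : ι → EuclideanSpace ℝ (Fin n))
    (hx : ∀ i, ‖x i‖ ≤ 1) (t : ι → ℝ) (ht : ∑ i, Real.exp (-(t i ^ 2 / 2)) < 1)
    (ht0 : ∀ i, 0 < t i) : ∃ ε : Fin n → Bool, ∀ i, inner ℝ (x i) (signVector ε) < t i := by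
  have hsum : ∑ ε : Fin n → Bool, ∑ i, Real.exp (t i * inner ℝ (x i) (signVector ε) - t i ^ 2) <
      ∑ _ε : Fin n → Bool, (1 : ℝ) := by
    rw [Finset.sum_comm]
    calc ∑ i, ∑ ε : Fin n → Bool, Real.exp (t i * inner ℝ (x i) (signVector ε) - t i ^ 2)
        ≤ ∑ i, 2 ^ n * Real.exp (-(t i ^ 2 / 2)) := by
          refine Finset.sum_le_sum fun i _ => ?_
          have h := sum_exp_inner_signVector_le (t i • x i)
          simp_rw [real_inner_smul_left] at h
          simp_rw [sub_eq_add_neg, Real.exp_add, ← Finset.sum_mul]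
          calc _ ≤ 2 ^ n * Real.exp (‖t i • x i‖ ^ 2 / 2) * Real.exp (-t i ^ 2) := by gcongr
            _ ≤ 2 ^ n * Real.exp (t i ^ 2 / 2) * Real.exp (-t i ^ 2) := by
              gcongr ?_ * Real.exp (?_ / 2) * _
              rw [norm_smul, mul_pow, Real.norm_eq_abs, sq_abs]
              exact mul_le_of_le_one_right (sq_nonneg _)
                (pow_le_one₀ (norm_nonneg _) (hx i))
            _ = _ := by
              rw [mul_assoc, ← Real.exp_add]
              congr 2
              ring
      _ = 2 ^ n * ∑ i, Real.exp (-(t i ^ 2 / 2)) := by rw [Finset.mul_sum]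
      _ < 2 ^ n * 1 := by gcongr
      _ = _ := by simp
  obtain ⟨ε, -, hε⟩ := Finset.exists_lt_of_sum_lt hsum
  refine ⟨ε, fun i => ?_⟩
  have h := (Finset.single_le_sum (f := fun i =>
    Real.exp (t i * inner ℝ (x i) (signVector ε) - t i ^ 2))
    (fun _ _ => (Real.exp_pos _).le) (Finset.mem_univ i)).trans_lt hε
  rw [Real.exp_lt_one_iff] at h
  nlinarith [ht0 i]

end Signs

theorem log_four_mul_le {N : ℕ} (hN : 2 ≤ N) : Real.log (4 * N) ≤ 3 * Real.log N := by
  have hN' : (2 : ℝ) ≤ N := by exact_mod_cast hN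
  have h : (3 : ℝ) * Real.log N = Real.log ((N : ℝ) ^ 3) := by rw [Real.log_pow]; norm_num
  rw [h]
  refine Real.log_le_log (by positivity) ?_
  nlinarith [mul_le_mul hN' hN' (by norm_num) (by linarith)]

theorem mul_exp_neg_sq_sqrt_log {N : ℕ} (hN : 2 ≤ N) :
    (N : ℝ) * Real.exp (-(Real.sqrt (2 * Real.log (4 * N)) ^ 2 / 2)) = 1 / 4 := by
  have hN' : (2 : ℝ) ≤ N := by exact_mod_cast hN
  have hl : 0 ≤ Real.log (4 * N) := Real.log_nonneg (by linarith)
  rw [Real.sq_sqrt (by positivity), mul_div_cancel_left₀ _ two_ne_zero, Real.exp_neg,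
    Real.exp_log (by positivity)]
  field_simp

/-- The product of the logarithms of the numbers of vertices of a polytope and of its polar. -/
theorem log_mul_log_extremePoints_ge {n : ℕ} (hn : 0 < n) (S : Finset (EuclideanSpace ℝ (Fin n)))
    (hB : closedBall 0 1 ⊆ convexHull ℝ (S : Set (EuclideanSpace ℝ (Fin n))))
    (hR : convexHull ℝ (S : Set (EuclideanSpace ℝ (Fin n))) ⊆ closedBall 0 (Real.sqrt n)) :
    2 ≤ ((convexHull ℝ (S : Set (EuclideanSpace ℝ (Fin n)))).extremePoints ℝ).ncard ∧
    2 ≤ ((innerPolar (convexHull ℝ (S : Set (EuclideanSpace ℝ (Fin n))))).extremePoints ℝ).ncard ∧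
    (n : ℝ) ≤
      36 * (Real.log ((convexHull ℝ (S : Set (EuclideanSpace ℝ (Fin n)))).extremePoints ℝ).ncard *
      Real.log
        ((innerPolar (convexHull ℝ (S : Set (EuclideanSpace ℝ (Fin n))))).extremePoints ℝ).ncard)
    := by
  set P := convexHull ℝ (S : Set (EuclideanSpace ℝ (Fin n)))
  have : Nontrivial (EuclideanSpace ℝ (Fin n)) :=
    Module.nontrivial_of_finrank_pos (R := ℝ) (by simpa using hn)
  have hr : 0 < Real.sqrt n := Real.sqrt_pos.2 (by exact_mod_cast hn)
  have hPc : Convex ℝ P := convex_convexHull ℝ _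
  have hPk : IsCompact P := S.finite_toSet.isCompact_convexHull ℝ
  have hQc := convex_innerPolar P
  have hQk : IsCompact (innerPolar P) :=
    (isCompact_closedBall 0 1).of_isClosed_subset (isClosed_innerPolar P) fun y hy => by
      simpa using norm_le_one_of_mem_innerPolar hB hy
  have hPf : (P.extremePoints ℝ).Finite := S.finite_toSet.subset extremePoints_convexHull_subset
  have hQf : ((innerPolar P).extremePoints ℝ).Finite := finite_extremePoints_innerPolar hn S
  have hM := two_le_ncard_extremePoints hPk hPc one_pos hB hPf
  have hN := two_le_ncard_extremePoints hQk hQc (inv_pos.2 hr)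
    (closedBall_inv_subset_innerPolar hr hR) hQf
  refine ⟨hM, hN, ?_⟩
  set M := (P.extremePoints ℝ).ncard with hMdef
  set N := ((innerPolar P).extremePoints ℝ).ncard with hNdef
  have hlog : ∀ {m : ℕ}, 2 ≤ m → 0 < Real.log (4 * m) := fun {m} hm => by
    have : (2 : ℝ) ≤ m := by exact_mod_cast hm
    exact Real.log_pos (by linarith)
  have hM0 := hlog hM
  have hN0 := hlog hN
  have hs : 0 < Real.sqrt (2 * Real.log (4 * M)) := Real.sqrt_pos.2 (by positivity)
  have ht : 0 < Real.sqrt (2 * Real.log (4 * N)) := Real.sqrt_pos.2 (by positivity)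
  have hexpM := mul_exp_neg_sq_sqrt_log hM
  have hexpN := mul_exp_neg_sq_sqrt_log hN
  have hs2 : Real.sqrt (2 * Real.log (4 * M)) ^ 2 = 2 * Real.log (4 * M) :=
    Real.sq_sqrt (by positivity)
  have ht2 : Real.sqrt (2 * Real.log (4 * N)) ^ 2 = 2 * Real.log (4 * N) :=
    Real.sq_sqrt (by positivity)
  set s := Real.sqrt (2 * Real.log (4 * M))
  set t := Real.sqrt (2 * Real.log (4 * N))
  have := hPf.fintype
  have := hQf.fintype
  obtain ⟨ε, hε⟩ := exists_signVector_inner_lt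
    (ι := P.extremePoints ℝ ⊕ (innerPolar P).extremePoints ℝ)
    (Sum.elim (fun v => (Real.sqrt n)⁻¹ • (v : EuclideanSpace ℝ (Fin n))) fun y => y)
    (by
      rintro (⟨v, hv⟩ | ⟨y, hy⟩)
      · have := hR hv.1
        rw [mem_closedBall_zero_iff] at this
        simp only [Sum.elim_inl, norm_smul, norm_inv, Real.norm_eq_abs, abs_of_pos hr]
        rwa [inv_mul_le_iff₀ hr, mul_one]
      · exact norm_le_one_of_mem_innerPolar hB hy.1)
    (Sum.elim (fun _ => s) fun _ => t)
    (by
      simp only [Fintype.sum_sum_type, Sum.elim_inl, Sum.elim_inr, Finset.sum_const,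
        Finset.card_univ, nsmul_eq_mul, ← Nat.card_eq_fintype_card, Nat.card_coe_set_eq]
      rw [← hMdef, ← hNdef, hexpM, hexpN]
      norm_num)
    (by rintro (_ | _) <;> assumption)
  have hP : ∀ v ∈ P, inner ℝ v (signVector ε) ≤ Real.sqrt n * s :=
    inner_le_of_forall_extremePoints hPk hPc fun v hv => by
      have h := (hε (Sum.inl ⟨v, hv⟩)).le
      simp only [Sum.elim_inl] at h
      rwa [real_inner_smul_left, inv_mul_le_iff₀ hr] at h
  have hQ : ∀ y ∈ innerPolar P, inner ℝ y (signVector ε) ≤ t :=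
    inner_le_of_forall_extremePoints hQk hQc fun y hy => (hε (Sum.inr ⟨y, hy⟩)).le
  have hmem : t⁻¹ • signVector ε ∈ P := by
    refine mem_of_forall_innerPolar hPc hPk.isClosed (hB (by simp)) fun y hy => ?_
    rw [real_inner_smul_right, inv_mul_le_iff₀ ht, mul_one]
    exact hQ y hy
  have hfin := hP _ hmem
  rw [real_inner_smul_left, inner_signVector_self, inv_mul_le_iff₀ ht] at hfin
  have hn2 : Real.sqrt n * Real.sqrt n = n := Real.mul_self_sqrt (Nat.cast_nonneg n)
  have hroot : Real.sqrt n ≤ t * s := by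
    refine le_of_mul_le_mul_left ?_ hr
    rw [hn2]
    linarith
  calc (n : ℝ) = Real.sqrt n * Real.sqrt n := hn2.symm
    _ ≤ (t * s) * (t * s) := by gcongr
    _ = s ^ 2 * t ^ 2 := by ring
    _ = 4 * (Real.log (4 * M) * Real.log (4 * N)) := by rw [hs2, ht2]; ring
    _ ≤ 4 * ((3 * Real.log M) * (3 * Real.log N)) := by
        gcongr
        · exact log_four_mul_le hM
        · exact log_four_mul_le hN
    _ = 36 * (Real.log M * Real.log N) := by ring

/-- **Figiel–Lindenstrauss–Milman** for polytopes between `B_n` and `√n · B_n`: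
there is an absolute constant `c > 0` such that every convex polytope `P ⊆ ℝⁿ` with
`B_n ⊆ P ⊆ √n · B_n` satisfies `log |V| * log |𝓕| ≥ c * n`, where `V` is the set of
vertices and `𝓕` the set of facets of `P`. -/
theorem flm_ball_sandwich :
    ∃ c : ℝ, 0 < c ∧
      ∀ (n : ℕ), 0 < n →
        ∀ S : Finset (EuclideanSpace ℝ (Fin n)),
          ∀ P : Set (EuclideanSpace ℝ (Fin n)), P = convexHull ℝ (S : Set (EuclideanSpace ℝ (Fin n))) →
            closedBall (0 : EuclideanSpace ℝ (Fin n)) 1 ⊆ P →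
            P ⊆ closedBall (0 : EuclideanSpace ℝ (Fin n)) (Real.sqrt n) →
              Real.log ((Set.extremePoints ℝ P).ncard) *
                  Real.log ({F : Set (EuclideanSpace ℝ (Fin n)) | IsFaceOfDim P F (n - 1)}.ncard)
                ≥ c * n := by
  refine ⟨1 / 36, by norm_num, ?_⟩
  rintro n hn S P rfl hB hR
  obtain ⟨hM, hN, h⟩ := log_mul_log_extremePoints_ge hn S hB hR
  have hle : Real.log ((innerPolar (convexHull ℝ
      (S : Set (EuclideanSpace ℝ (Fin n))))).extremePoints ℝ).ncard ≤ Real.log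
      ({F : Set (EuclideanSpace ℝ (Fin n)) | IsFaceOfDim (convexHull ℝ (S : Set _)) F (n - 1)}.ncard)
      := Real.log_le_log (by exact_mod_cast (by omega : 0 < _))
        (by exact_mod_cast ncard_extremePoints_innerPolar_le hn S)
  have hM0 : 0 ≤ Real.log ((convexHull ℝ
      (S : Set (EuclideanSpace ℝ (Fin n)))).extremePoints ℝ).ncard := Real.log_natCast_nonneg _
  have := mul_le_mul_of_nonneg_left hle hM0
  linarith
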